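/- Let A be a *-algebra. The following statements are equivalent: (i) the Lebesgue decomposition of representable positive functionals over A is unique; (ii) for all representable positive functionals t, f, g on A, the property t ≤ f ≪ g implies t ≪ g; (iii) for all representable positive functionals f, g, p on A, the properties p ≤ f, f ≪ g and p ⊥ g imply p = 0. -/

import Mathlib

open scoped ComplexOrder InnerProductSpace

section StarAlgebraDefs

variable {A : Type} [NonUnitalRing A] [Module ℂ A] [SMulCommClass ℂ A A]
  [IsScalarTower ℂ A A] [StarRing A] [StarModule ℂ A]

/-- A linear functional on a `⋆`-algebra is positive if `0 ≤ f (a⋆ * a)` for every `a`. -/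
def IsPosFn (f : A →ₗ[ℂ] ℂ) : Prop := ∀ a : A, 0 ≤ f (star a * a)

/-- Order on positive functionals: `f ≤ g` iff `g - f` is positive. -/
def FnLE (f g : A →ₗ[ℂ] ℂ) : Prop := IsPosFn (g - f)

/-- `f` is induced by a `⋆`-representation on the Hilbert space `H` with a cyclic vector. -/
def IsRepOn (f : A →ₗ[ℂ] ℂ) (H : Type) [NormedAddCommGroup H]
    [InnerProductSpace ℂ H] [CompleteSpace H] : Prop :=
  ∃ (π : A →⋆ₙₐ[ℂ] (H →L[ℂ] H)) (ξ : H),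
    DenseRange (fun a : A => π a ξ) ∧ ∀ a : A, f a = ⟪ξ, π a ξ⟫_ℂ

/-- A positive linear functional is representable if it is induced by a cyclic
`⋆`-representation on some complex Hilbert space. -/
def IsRepresentable (f : A →ₗ[ℂ] ℂ) : Prop :=
  ∃ (H : Type) (_ : NormedAddCommGroup H) (_ : InnerProductSpace ℂ H) (_ : CompleteSpace H),
    IsRepOn f H

/-- Absolute continuity `f ≪ g` for representable positive functionals: `f` is the pointwise
limit of an increasing sequence of representable positive functionals `fₙ` with
`fₙ ≤ αₙ • g` for some positive reals `αₙ`. -/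
def AbsContR (f g : A →ₗ[ℂ] ℂ) : Prop :=
  ∃ (fn : ℕ → (A →ₗ[ℂ] ℂ)) (α : ℕ → ℝ),
    (∀ n, IsRepresentable (fn n) ∧ IsPosFn (fn n)) ∧
    (∀ n, 0 < α n) ∧
    (∀ n, FnLE (fn n) (fn (n + 1))) ∧
    (∀ n, FnLE (fn n) (((α n : ℂ)) • g)) ∧
    (∀ a : A, Filter.Tendsto (fun n => fn n a) Filter.atTop (nhds (f a)))

/-- Singularity `f ⊥ g` for representable positive functionals: the only representable
positive functional dominated by both `f` and `g` is `0`. -/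
def SingularR (f g : A →ₗ[ℂ] ℂ) : Prop :=
  ∀ p : A →ₗ[ℂ] ℂ, IsRepresentable p → IsPosFn p → FnLE p f → FnLE p g → p = 0

/-- `f = fr + fs` is a Lebesgue decomposition of `f` with respect to `g` (representable
positive functionals). -/
def IsLebDecompR (f g fr fs : A →ₗ[ℂ] ℂ) : Prop :=
  IsRepresentable fr ∧ IsPosFn fr ∧ IsRepresentable fs ∧ IsPosFn fs ∧
    f = fr + fs ∧ AbsContR fr g ∧ SingularR fs g

/-- The Lebesgue decomposition of `f` with respect to `g` is unique. -/
def LebDecompUniqueForR (f g : A →ₗ[ℂ] ℂ) : Prop :=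
  ∀ fr fs fr' fs' : A →ₗ[ℂ] ℂ, IsLebDecompR f g fr fs → IsLebDecompR f g fr' fs' →
    fr = fr' ∧ fs = fs'

end StarAlgebraDefs

/-- The Lebesgue decomposition of representable positive functionals over `A` is unique. -/
def LebDecompUniqueR (A : Type) [NonUnitalRing A] [Module ℂ A] [SMulCommClass ℂ A A]
    [IsScalarTower ℂ A A] [StarRing A] [StarModule ℂ A] : Prop :=
  ∀ f g : A →ₗ[ℂ] ℂ, IsRepresentable f → IsPosFn f → IsRepresentable g → IsPosFn g →
    LebDecompUniqueForR f g

/-!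
In a cyclic representation `π` of `f + g` with cyclic vector `ξ`, the functionals `f` and `g` become
`a ↦ ⟪ξ, T π(a) ξ⟫` and `a ↦ ⟪ξ, (1 - T) π(a) ξ⟫` for an operator `0 ≤ T ≤ 1` in the commutant of
`π`. Let `P` be the projection onto the fixed vectors of `T`. By the mean ergodic theorem
`T - T ^ (n + 1)` increases to `T - P`, and it is at most `(n + 1) • (1 - T)`; so `T - P` gives an
`r ≪ g`. The operator `P` gives an `s` which is singular to `g` because `(1 - T) * P = 0`, and
singular to `r` because `(T - P) * P = 0`. Moreover `r` is the largest functional below `f` that is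
absolutely continuous with respect to `g`.

Hence any other decomposition `f = r' + s'` has `r' ≤ r`, and `p = r - r' = s' - s` satisfies
`p ≤ r ≪ g` and `p ⊥ g`. Conversely, if `p ≤ f ≪ g` and `p ⊥ g`, then `f` and `p` form a Lebesgue
decomposition of `f + p`; if it is the one constructed above, then `p ⊥ f`, so `p = 0`.
-/

section Operators

open Filter Topology

theorem mul_eq_zero_of_nonneg_of_le {B : Type*} [NonUnitalCStarAlgebra B] [PartialOrder B]
    [StarOrderedRing B] {a b c : B} (ha : 0 ≤ a) (hab : a ≤ b) (hbc : b * c = 0) : a * c = 0 := by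
  have hconj : star c * a * c = 0 := le_antisymm
    ((star_left_conjugate_le_conjugate hab c).trans_eq (by rw [mul_assoc, hbc, mul_zero]))
    (star_left_conjugate_nonneg ha c)
  have hsqrt : CFC.sqrt a * c = 0 := by
    rw [← norm_eq_zero, ← sq_eq_zero_iff, ← CFC.norm_star_mul_mul_self_of_nonneg c ha,
      hconj, norm_zero]
  rw [← CFC.sqrt_mul_sqrt_self a, mul_assoc, hsqrt, mul_zero]

theorem le_sub_of_isStarProjection {R : Type*} [Ring R] [StarRing R] [PartialOrder R]
    [StarOrderedRing R] {a b p : R} (hp : IsStarProjection p) (ha : IsSelfAdjoint a)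
    (hb : IsSelfAdjoint b) (hba : b ≤ a) (hap : a * p = p) (hbp : b * p = 0) : b ≤ a - p := by
  have hpa : p * a = p := by simpa [ha.star_eq, hp.isSelfAdjoint.star_eq] using congr(star $hap)
  have hpb : p * b = 0 := by simpa [hb.star_eq, hp.isSelfAdjoint.star_eq] using congr(star $hbp)
  have hconj : (1 - p) * (a - b) * (1 - p) = a - p - b := by
    simp only [sub_mul, mul_sub, one_mul, mul_one, hpa, hpb, hap, hbp, hp.isIdempotentElem.eq,
      zero_mul]
    abel
  rw [← sub_nonneg, ← hconj]
  exact hp.one_sub.isSelfAdjoint.conjugate_nonneg (sub_nonneg.2 hba)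

theorem one_sub_pow_le_nsmul_one_sub {B : Type*} [CStarAlgebra B] [PartialOrder B]
    [StarOrderedRing B] {a : B} (h0 : 0 ≤ a) (h1 : a ≤ 1) (n : ℕ) :
    1 - a ^ n ≤ n • (1 - a) := by
  induction n with
  | zero => simp
  | succ n ih =>
    have hcomm : Commute (1 - a ^ n) (1 - a) :=
      (Commute.one_left _).sub_left ((Commute.one_right _).sub_right (Commute.pow_self a n))
    have hpow : 0 ≤ 1 - a ^ n :=
      sub_nonneg.2 (by simpa using CStarAlgebra.pow_antitone h0 h1 n.zero_le)
    calc 1 - a ^ (n + 1) = (1 - a ^ n) + (1 - a) - (1 - a ^ n) * (1 - a) := by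
          rw [pow_succ]; noncomm_ring
      _ ≤ (1 - a ^ n) + (1 - a) := sub_le_self _ (hcomm.mul_nonneg hpow (sub_nonneg.2 h1))
      _ ≤ n • (1 - a) + (1 - a) := by gcongr
      _ = (n + 1) • (1 - a) := (succ_nsmul _ _).symm

theorem le_iff_forall_inner_apply_le {H : Type*} [NormedAddCommGroup H] [InnerProductSpace ℂ H]
    {S T : H →L[ℂ] H} : S ≤ T ↔ ∀ x, ⟪x, S x⟫_ℂ ≤ ⟪x, T x⟫_ℂ := by
  have hsub (x : H) : ⟪x, S x⟫_ℂ ≤ ⟪x, T x⟫_ℂ ↔ 0 ≤ ⟪x, (T - S) x⟫_ℂ := by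
    rw [sub_apply, inner_sub_right, sub_nonneg]
  simp only [hsub]
  refine ⟨fun h => h.inner_nonneg_right, fun h => (T - S).isPositive_iff_complex.2 fun x => ?_⟩
  obtain ⟨r, hr, hrx⟩ := RCLike.nonneg_iff_exists_ofReal.1 (h x)
  rw [← inner_conj_symm, ← hrx]
  simpa using hr

variable {H : Type*} [NormedAddCommGroup H] [InnerProductSpace ℂ H] [CompleteSpace H]
  {T : H →L[ℂ] H}

/-- The orthogonal projection onto the space of fixed vectors of `T`. -/
noncomputable def fixedProjection (T : H →L[ℂ] H) : H →L[ℂ] H :=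
  (T.eqLocus (1 : H →L[ℂ] H)).starProjection

theorem isStarProjection_fixedProjection (T : H →L[ℂ] H) :
    IsStarProjection (fixedProjection T) :=
  isStarProjection_starProjection

theorem mul_fixedProjection (T : H →L[ℂ] H) : T * fixedProjection T = fixedProjection T := by
  ext x
  exact (T.eqLocus (1 : H →L[ℂ] H)).starProjection_apply_mem x

theorem pow_mul_fixedProjection (T : H →L[ℂ] H) (n : ℕ) :
    T ^ n * fixedProjection T = fixedProjection T := by
  induction n with
  | zero => rw [pow_zero, one_mul]
  | succ n ih => rw [pow_succ, mul_assoc, mul_fixedProjection, ih]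

theorem norm_apply_sq_eq_re_inner (hT : IsSelfAdjoint T) (x : H) :
    ‖T x‖ ^ 2 = (⟪x, (T ^ 2) x⟫_ℂ).re := by
  rw [T.apply_norm_sq_eq_inner_adjoint_right, ← ContinuousLinearMap.star_eq_adjoint, hT.star_eq, sq]
  rfl

theorem norm_apply_sq_le_norm_mul_re_inner (h0 : 0 ≤ T) (x : H) :
    ‖T x‖ ^ 2 ≤ ‖T‖ * (⟪x, T x⟫_ℂ).re := by
  have hsq : T ^ 2 ≤ ‖T‖ • T := by
    have hcomm : CFC.sqrt T * T = T * CFC.sqrt T := ((Commute.refl T).cfcₙ_nnreal _).eq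
    have h := CStarAlgebra.star_left_conjugate_le_norm_smul (a := CFC.sqrt T) (b := T)
    rwa [(CFC.sqrt_nonneg T).isSelfAdjoint.star_eq, hcomm, mul_assoc, CFC.sqrt_mul_sqrt_self T,
      ← sq] at h
  have hinner := (Complex.le_def.1 (le_iff_forall_inner_apply_le.1 hsq x)).1
  rw [norm_apply_sq_eq_re_inner h0.isSelfAdjoint]
  rwa [smul_apply, inner_smul_right_eq_smul, Complex.smul_re] at hinner

theorem tendsto_apply_zero_of_tendsto_inner {R : H →L[ℂ] H} {D : ℕ → H →L[ℂ] H}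
    (h0 : ∀ n, 0 ≤ D n) (hR : ∀ n, D n ≤ R) {x : H}
    (hx : Tendsto (fun n => ⟪x, D n x⟫_ℂ) atTop (𝓝 0)) :
    Tendsto (fun n => D n x) atTop (𝓝 0) := by
  have hre : Tendsto (fun n => (⟪x, D n x⟫_ℂ).re) atTop (𝓝 0) :=
    (Complex.continuous_re.tendsto 0).comp hx
  have hbound (n : ℕ) : ‖D n x‖ ^ 2 ≤ ‖R‖ * (⟪x, D n x⟫_ℂ).re := by
    have hpos := (D n).nonneg_iff_isPositive.1 (h0 n)
    grw [norm_apply_sq_le_norm_mul_re_inner (h0 n) x,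
      CStarAlgebra.norm_le_norm_of_nonneg_of_le (h0 n) (hR n)]
    exact (Complex.le_def.1 (hpos.inner_nonneg_right x)).1
  have hsq : Tendsto (fun n => ‖D n x‖ ^ 2) atTop (𝓝 0) :=
    squeeze_zero (fun _ => sq_nonneg _) hbound (by simpa using hre.const_mul ‖R‖)
  rw [tendsto_zero_iff_norm_tendsto_zero]
  simpa using hsq.sqrt

-- `‖T ^ n x‖² = ⟪x, T ^ (2n) x⟫ ≤ ⟪x, T ^ i x⟫` for all `i ≤ n`; average over `i`.
theorem norm_pow_apply_sq_le_norm_birkhoffAverage (h0 : 0 ≤ T) (h1 : T ≤ 1) (n : ℕ) (x : H) :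
    ‖(T ^ n) x‖ ^ 2 ≤ ‖x‖ * ‖birkhoffAverage ℂ T id (n + 1) x‖ := by
  have hle (i : ℕ) (hi : i ∈ Finset.range (n + 1)) :
      ‖(T ^ n) x‖ ^ 2 ≤ (⟪x, (T ^ i) x⟫_ℂ).re := by
    rw [norm_apply_sq_eq_re_inner (CStarAlgebra.pow_nonneg h0 n).isSelfAdjoint, ← pow_mul]
    have hpow : T ^ (n * 2) ≤ T ^ i := CStarAlgebra.pow_antitone h0 h1 (by grind)
    exact (Complex.le_def.1 (le_iff_forall_inner_apply_le.1 hpow x)).1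
  calc ‖(T ^ n) x‖ ^ 2
      ≤ (n + 1 : ℝ)⁻¹ * ∑ i ∈ Finset.range (n + 1), (⟪x, (T ^ i) x⟫_ℂ).re := by
        rw [le_inv_mul_iff₀ (by positivity)]
        simpa using Finset.card_nsmul_le_sum _ _ _ hle
    _ = (⟪x, birkhoffAverage ℂ T id (n + 1) x⟫_ℂ).re := by
        rw [birkhoffAverage_congr_ring ℂ ℝ, birkhoffAverage, inner_smul_right_eq_smul,
          Complex.smul_re, birkhoffSum, inner_sum, Complex.re_sum]
        simp
    _ ≤ ‖x‖ * ‖birkhoffAverage ℂ T id (n + 1) x‖ := re_inner_le_norm (𝕜 := ℂ) x _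

theorem tendsto_pow_apply_fixedProjection (h0 : 0 ≤ T) (h1 : T ≤ 1) (x : H) :
    Tendsto (fun n => (T ^ n) x) atTop (𝓝 (fixedProjection T x)) := by
  set y := x - fixedProjection T x with hy
  have hmean : Tendsto (birkhoffAverage ℂ T id · y) atTop (𝓝 0) := by
    have herg := T.tendsto_birkhoffAverage_orthogonalProjection
      ((CStarAlgebra.norm_le_one_iff_of_nonneg T h0).2 h1) y
    have hPy : fixedProjection T y = 0 := by
      rw [hy, map_sub, ← mul_apply_eq_comp,
        (isStarProjection_fixedProjection T).isIdempotentElem.eq, sub_self]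
    convert herg using 2
    exact hPy.symm
  have hsq : Tendsto (fun n => ‖(T ^ n) y‖ ^ 2) atTop (𝓝 0) :=
    squeeze_zero (fun _ => sq_nonneg _) (norm_pow_apply_sq_le_norm_birkhoffAverage h0 h1 · y)
      (by simpa using ((tendsto_add_atTop_iff_nat 1).2 hmean).norm.const_mul ‖y‖)
  have hpow : Tendsto (fun n => (T ^ n) y) atTop (𝓝 0) := by
    rw [tendsto_zero_iff_norm_tendsto_zero]
    simpa using hsq.sqrt
  rw [← tendsto_sub_nhds_zero_iff]
  convert hpow using 2 with n
  rw [hy, map_sub, ← mul_apply_eq_comp, pow_mul_fixedProjection]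

end Operators

section Representations

variable {A : Type*} [NonUnitalNonAssocSemiring A] [Module ℂ A] [Star A]
  {H : Type*} [NormedAddCommGroup H] [InnerProductSpace ℂ H] [CompleteSpace H]
  {K : Type*} [NormedAddCommGroup K] [InnerProductSpace ℂ K] [CompleteSpace K]
  (π : A →⋆ₙₐ[ℂ] (H →L[ℂ] H)) (ρ : A →⋆ₙₐ[ℂ] (K →L[ℂ] K)) (ξ : H)

theorem inner_map_star_left (a : A) (x y : H) : ⟪π (star a) x, y⟫_ℂ = ⟪x, π a y⟫_ℂ := by
  rw [map_star, ContinuousLinearMap.star_eq_adjoint, ContinuousLinearMap.adjoint_inner_left]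

theorem inner_map_star_right (a : A) (x y : H) : ⟪x, π (star a) y⟫_ℂ = ⟪π a x, y⟫_ℂ := by
  rw [map_star, ContinuousLinearMap.star_eq_adjoint, ContinuousLinearMap.adjoint_inner_right]

/-- The commutant `π(A)'` of a representation, as an algebra of bounded operators. -/
noncomputable def commutant : Subalgebra ℂ (H →L[ℂ] H) :=
  Subalgebra.centralizer ℂ (Set.range π)

/-- The map `a ↦ π(a)ξ`, whose range is dense exactly when `ξ` is cyclic for `π`. -/
noncomputable def orbitMap : A →ₗ[ℂ] H where
  toFun a := π a ξ
  map_add' a b := by simp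
  map_smul' c a := by simp

/-- The functionals `a ↦ ⟪ξ, T π(a) ξ⟫`, linearly parametrized by the operator `T`. For `T = 1` this
is the vector functional of `ξ`; for `0 ≤ T` in the commutant of a cyclic representation `T` plays
the role of a Radon–Nikodym derivative. -/
noncomputable def vectorFunctional : (H →L[ℂ] H) →ₗ[ℂ] A →ₗ[ℂ] ℂ :=
  LinearMap.mk₂ ℂ (fun T a => ⟪ξ, T (π a ξ)⟫_ℂ)
    (fun S T a => inner_add_right ..) (fun c T a => inner_smul_right ..)
    (fun T a b => by simp) (fun c T a => by simp)

/-- The closed subspace generated by the orbit of `ξ`. -/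
noncomputable def cyclicSubspace : Submodule ℂ H :=
  (orbitMap π ξ).range.topologicalClosure

variable {π ρ ξ} {S T : H →L[ℂ] H}

theorem mem_commutant_iff : T ∈ commutant π ↔ ∀ a, Commute T (π a) := by
  simp [commutant, Subalgebra.mem_centralizer_iff, Commute, SemiconjBy, eq_comm]

theorem vectorFunctional_star_mul (hT : T ∈ commutant π) (a b : A) :
    vectorFunctional π ξ T (star b * a) = ⟪π b ξ, T (π a ξ)⟫_ℂ := by
  have hcomm := congr($((mem_commutant_iff.1 hT (star b)).eq) (π a ξ))
  calc ⟪ξ, T (π (star b * a) ξ)⟫_ℂ = ⟪ξ, T (π (star b) (π a ξ))⟫_ℂ := by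
        rw [map_mul, mul_apply_eq_comp]
    _ = ⟪ξ, π (star b) (T (π a ξ))⟫_ℂ := congr(⟪ξ, $hcomm⟫_ℂ)
    _ = ⟪π b ξ, T (π a ξ)⟫_ℂ := inner_map_star_right π b _ _

theorem starProjection_mem_commutant {K : Submodule ℂ H} [K.HasOrthogonalProjection]
    (hK : ∀ a, ∀ x ∈ K, π a x ∈ K) : K.starProjection ∈ commutant π := by
  refine mem_commutant_iff.2 fun a =>
    (ContinuousLinearMap.IsIdempotentElem.commute_iff
      isStarProjection_starProjection.isIdempotentElem).2 ⟨?_, ?_⟩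
  · rw [Submodule.range_starProjection]
    exact hK a
  · rw [Submodule.ker_starProjection]
    intro y hy x hx
    rw [ContinuousLinearMap.coe_coe, ← inner_map_star_left]
    exact hy _ (hK _ _ hx)

theorem fixedProjection_mem_commutant (hT : T ∈ commutant π) :
    fixedProjection T ∈ commutant π := by
  refine starProjection_mem_commutant fun a x (hx : T x = x) => ?_
  have hcomm := congr($((mem_commutant_iff.1 hT a).eq) x)
  rw [mul_apply_eq_comp, mul_apply_eq_comp, hx] at hcomm
  exact hcomm

theorem sqrt_mem_commutant (hT : T ∈ commutant π) : CFC.sqrt T ∈ commutant π :=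
  mem_commutant_iff.2 fun a => (mem_commutant_iff.1 hT a).cfcₙ_nnreal _

theorem vectorFunctional_eq_of_nonneg (h0 : 0 ≤ T) (hT : T ∈ commutant π) :
    vectorFunctional π ξ T = vectorFunctional π (CFC.sqrt T ξ) 1 := by
  ext a
  have hcomm := congr($((mem_commutant_iff.1 (sqrt_mem_commutant hT) a).eq) ξ)
  have hsymm := (CFC.sqrt T).nonneg_iff_isPositive.1 (CFC.sqrt_nonneg T)
  calc ⟪ξ, T (π a ξ)⟫_ℂ = ⟪ξ, CFC.sqrt T (CFC.sqrt T (π a ξ))⟫_ℂ := by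
        rw [← mul_apply_eq_comp (CFC.sqrt T) (CFC.sqrt T), CFC.sqrt_mul_sqrt_self T]
    _ = ⟪CFC.sqrt T ξ, CFC.sqrt T (π a ξ)⟫_ℂ := (hsymm.inner_left_eq_inner_right _ _).symm
    _ = ⟪CFC.sqrt T ξ, π a (CFC.sqrt T ξ)⟫_ℂ := congr(⟪CFC.sqrt T ξ, $hcomm⟫_ℂ)

theorem map_mem_cyclicSubspace (a : A) {x : H} (hx : x ∈ cyclicSubspace π ξ) :
    π a x ∈ cyclicSubspace π ξ := by
  refine map_mem_closure (π a).continuous hx ?_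
  rintro _ ⟨b, rfl⟩
  exact ⟨a * b, congr($(map_mul π a b) ξ)⟩

instance : CompleteSpace (cyclicSubspace π ξ) :=
  (Submodule.isClosed_topologicalClosure _).completeSpace_coe

theorem map_starProjection_cyclicSubspace (a : A) :
    π a ((cyclicSubspace π ξ).starProjection ξ) = π a ξ := by
  have hcomm := congr($((mem_commutant_iff.1 (starProjection_mem_commutant
    fun a x => map_mem_cyclicSubspace (π := π) (ξ := ξ) a) a).eq) ξ)
  have hmem : π a ξ ∈ cyclicSubspace π ξ := Submodule.le_topologicalClosure _ ⟨a, rfl⟩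
  rw [mul_apply_eq_comp, mul_apply_eq_comp, Submodule.starProjection_eq_self_iff.2 hmem] at hcomm
  exact hcomm.symm

/-- The restriction of a representation to a closed invariant subspace. -/
noncomputable def subrepresentation (π : A →⋆ₙₐ[ℂ] (H →L[ℂ] H)) (K : Submodule ℂ H)
    [CompleteSpace K] (hK : ∀ a, ∀ x ∈ K, π a x ∈ K) : A →⋆ₙₐ[ℂ] (K →L[ℂ] K) where
  toFun a := (π a).restrict (hK a)
  map_zero' := by ext x; simp
  map_add' a b := by ext x; simp
  map_smul' c a := by ext x; simp
  map_mul' a b := by ext x; simp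
  map_star' a := by
    rw [ContinuousLinearMap.star_eq_adjoint, ContinuousLinearMap.eq_adjoint_iff]
    exact fun x y => inner_map_star_left π a (x : H) y

/-- The direct sum of two representations, on the Hilbert sum of their spaces. -/
noncomputable def directSum (π : A →⋆ₙₐ[ℂ] (H →L[ℂ] H)) (ρ : A →⋆ₙₐ[ℂ] (K →L[ℂ] K)) :
    A →⋆ₙₐ[ℂ] (WithLp 2 (H × K) →L[ℂ] WithLp 2 (H × K)) where
  toFun a := (WithLp.prodContinuousLinearEquiv 2 ℂ H K).symm.toContinuousLinearMap.comp
    (((π a).prodMap (ρ a)).comp (WithLp.prodContinuousLinearEquiv 2 ℂ H K).toContinuousLinearMap)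
  map_zero' := by ext x : 1; simp; rfl
  map_add' a b := by ext x : 1; simp; rfl
  map_smul' c a := by ext x : 1; simp; rfl
  map_mul' a b := by ext x : 1; simp; rfl
  map_star' a := by
    rw [ContinuousLinearMap.star_eq_adjoint, ContinuousLinearMap.eq_adjoint_iff]
    intro x y
    rw [WithLp.prod_inner_apply, WithLp.prod_inner_apply]
    exact congrArg₂ (· + ·) (inner_map_star_left π a _ _) (inner_map_star_left ρ a _ _)

theorem adjoint_comp_self_mem_commutant {V : H →L[ℂ] K} (hV : ∀ a x, V (π a x) = ρ a (V x)) :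
    V.adjoint ∘L V ∈ commutant π := by
  refine mem_commutant_iff.2 fun a => ContinuousLinearMap.ext fun x => ext_inner_left ℂ fun y => ?_
  simp only [mul_apply_eq_comp, ContinuousLinearMap.comp_apply,
    ContinuousLinearMap.adjoint_inner_right, hV, ← inner_map_star_left]

end Representations

section Domination

variable {A : Type} [NonUnitalRing A] [Module ℂ A] [StarRing A]
  {f g h p : A →ₗ[ℂ] ℂ}

theorem fnLE_iff : FnLE f g ↔ ∀ a, f (star a * a) ≤ g (star a * a) := by
  simp [FnLE, IsPosFn]

theorem FnLE.refl (f : A →ₗ[ℂ] ℂ) : FnLE f f :=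
  fnLE_iff.2 fun _ => le_rfl

theorem FnLE.trans (hfg : FnLE f g) (hgh : FnLE g h) : FnLE f h :=
  fnLE_iff.2 fun a => (fnLE_iff.1 hfg a).trans (fnLE_iff.1 hgh a)

theorem fnLE_add_right (hg : IsPosFn g) : FnLE f (f + g) := by
  rwa [FnLE, add_sub_cancel_left]

theorem fnLE_add_left (hg : IsPosFn g) : FnLE f (g + f) := by
  rwa [FnLE, add_sub_cancel_right]

theorem fnLE_of_tendsto {fn : ℕ → A →ₗ[ℂ] ℂ} (hmono : ∀ n, FnLE (fn n) (fn (n + 1)))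
    (hlim : ∀ a, Filter.Tendsto (fun n => fn n a) Filter.atTop (nhds (f a))) (n : ℕ) :
    FnLE (fn n) f :=
  fnLE_iff.2 fun a => (monotone_nat_of_le_succ fun k => fnLE_iff.1 (hmono k) a).ge_of_tendsto
    (hlim (star a * a)) n

theorem SingularR.mono_left (h : SingularR f g) (hpf : FnLE p f) : SingularR p g :=
  fun q hq hq' hqp hqg => h q hq hq' (hqp.trans hpf) hqg

theorem IsPosFn.real_smul_fnLE_real_smul (hp : IsPosFn p) {c d : ℝ} (hcd : c ≤ d) :
    FnLE ((c : ℂ) • p) ((d : ℂ) • p) :=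
  fnLE_iff.2 fun a => mul_le_mul_of_nonneg_right (Complex.real_le_real.2 hcd) (hp a)

theorem FnLE.real_smul (hfg : FnLE f g) {c : ℝ} (hc : 0 ≤ c) :
    FnLE ((c : ℂ) • f) ((c : ℂ) • g) :=
  fnLE_iff.2 fun a => mul_le_mul_of_nonneg_left (fnLE_iff.1 hfg a) (Complex.zero_le_real.2 hc)

end Domination

section Intertwining

variable {A : Type*} [NonUnitalNonAssocRing A] [Module ℂ A] [Star A]
  {H : Type*} [NormedAddCommGroup H] [InnerProductSpace ℂ H] [CompleteSpace H]
  {K : Type*} [NormedAddCommGroup K] [InnerProductSpace ℂ K] [CompleteSpace K]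
  {π : A →⋆ₙₐ[ℂ] (H →L[ℂ] H)} {ρ : A →⋆ₙₐ[ℂ] (K →L[ℂ] K)} {ξ : H}

theorem exists_intertwining_of_norm_le {η : K} (hξ : DenseRange fun a => π a ξ)
    (hη : DenseRange fun a => ρ a η) {C : ℝ} (hC : ∀ a, ‖ρ a η‖ ≤ C * ‖π a ξ‖) :
    ∃ V : H →L[ℂ] K, V ξ = η ∧ ∀ a x, V (π a x) = ρ a (V x) := by
  let V : H →L[ℂ] K := (orbitMap ρ η).extendOfNorm (orbitMap π ξ)
  have hV (a : A) : V (π a ξ) = ρ a η :=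
    LinearMap.extendOfNorm_eq (f := orbitMap ρ η) (e := orbitMap π ξ) hξ ⟨C, hC⟩ a
  have hint (a : A) (x : H) : V (π a x) = ρ a (V x) := by
    refine hξ.induction_on (p := fun x => V (π a x) = ρ a (V x)) x
      (isClosed_eq (by fun_prop) (by fun_prop)) fun b => ?_
    rw [hV, ← mul_apply_eq_comp, ← mul_apply_eq_comp, ← map_mul, ← map_mul, hV]
  refine ⟨V, sub_eq_zero.1 (hη.eq_zero_of_inner_left ℂ fun a => ?_), hint⟩
  rw [← inner_map_star_left, map_sub, ← hint, hV, sub_self, inner_zero_left]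

end Intertwining

section Representability

variable {A : Type} [NonUnitalRing A] [Module ℂ A] [StarRing A] {f g p : A →ₗ[ℂ] ℂ}
  {H : Type} [NormedAddCommGroup H] [InnerProductSpace ℂ H] [CompleteSpace H]
  {π : A →⋆ₙₐ[ℂ] (H →L[ℂ] H)} {ξ : H} {S T R : H →L[ℂ] H}

theorem isRepresentable_vectorFunctional_one (π : A →⋆ₙₐ[ℂ] (H →L[ℂ] H)) (ξ : H) :
    IsRepresentable (vectorFunctional π ξ 1) := by
  let K := cyclicSubspace π ξ
  let η : K := ⟨K.starProjection ξ, K.starProjection_apply_mem ξ⟩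
  let σ := subrepresentation π K fun a _ => map_mem_cyclicSubspace a
  have hση (a : A) : (σ a η : H) = π a ξ := map_starProjection_cyclicSubspace a
  refine ⟨K, inferInstance, inferInstance, inferInstance, σ, η, fun x => ?_, fun a => ?_⟩
  · have hrange : Set.range ((↑) ∘ fun a => σ a η) = Set.range fun a => π a ξ :=
      congrArg Set.range (funext hση)
    rw [closure_subtype, ← Set.range_comp, hrange]
    exact x.2
  · have hmem : π a ξ ∈ K := Submodule.le_topologicalClosure _ ⟨a, rfl⟩
    calc ⟪ξ, π a ξ⟫_ℂ = ⟪ξ, K.starProjection (π a ξ)⟫_ℂ := by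
          rw [Submodule.starProjection_eq_self_iff.2 hmem]
      _ = ⟪K.starProjection ξ, π a ξ⟫_ℂ := (K.inner_starProjection_left_eq_right ξ (π a ξ)).symm
      _ = ⟪η, σ a η⟫_ℂ := by rw [← hση]; rfl

theorem isRepresentable_vectorFunctional (hT : T ∈ commutant π) (h0 : 0 ≤ T) :
    IsRepresentable (vectorFunctional π ξ T) := by
  rw [vectorFunctional_eq_of_nonneg h0 hT]
  exact isRepresentable_vectorFunctional_one π _

theorem IsRepresentable.exists_eq_vectorFunctional (hf : IsRepresentable f) :
    ∃ (H : Type) (_ : NormedAddCommGroup H) (_ : InnerProductSpace ℂ H) (_ : CompleteSpace H)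
      (π : A →⋆ₙₐ[ℂ] (H →L[ℂ] H)) (ξ : H), (DenseRange fun a => π a ξ) ∧
      f = vectorFunctional π ξ 1 := by
  obtain ⟨H, _, _, _, π, ξ, hξ, hfξ⟩ := hf
  exact ⟨H, _, _, _, π, ξ, hξ, LinearMap.ext hfξ⟩

theorem IsRepresentable.isPosFn (hf : IsRepresentable f) : IsPosFn f := by
  obtain ⟨H, _, _, _, π, ξ, -, rfl⟩ := hf.exists_eq_vectorFunctional
  intro a
  rw [vectorFunctional_star_mul (one_mem _)]
  exact ContinuousLinearMap.isPositive_one.inner_nonneg_right _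

theorem IsRepresentable.add (hf : IsRepresentable f) (hg : IsRepresentable g) :
    IsRepresentable (f + g) := by
  obtain ⟨H, _, _, _, π, ξ, -, rfl⟩ := hf.exists_eq_vectorFunctional
  obtain ⟨K, _, _, _, ρ, η, -, rfl⟩ := hg.exists_eq_vectorFunctional
  have hsum : vectorFunctional π ξ 1 + vectorFunctional ρ η 1 =
      vectorFunctional (directSum π ρ) (WithLp.toLp 2 (ξ, η)) 1 := by
    ext a
    exact (WithLp.prod_inner_apply (WithLp.toLp 2 (ξ, η)) (WithLp.toLp 2 (π a ξ, ρ a η))).symm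
  rw [hsum]
  exact isRepresentable_vectorFunctional_one _ _

theorem IsRepresentable.real_smul (hf : IsRepresentable f) {c : ℝ} (hc : 0 ≤ c) :
    IsRepresentable ((c : ℂ) • f) := by
  obtain ⟨H, _, _, _, π, ξ, -, rfl⟩ := hf.exists_eq_vectorFunctional
  rw [← map_smul]
  exact isRepresentable_vectorFunctional (Subalgebra.smul_mem _ (one_mem _) _)
    (smul_nonneg (Complex.zero_le_real.2 hc) zero_le_one)

theorem fnLE_vectorFunctional_iff (hξ : DenseRange fun a => π a ξ) (hS : S ∈ commutant π)
    (hT : T ∈ commutant π) :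
    FnLE (vectorFunctional π ξ S) (vectorFunctional π ξ T) ↔ S ≤ T := by
  simp only [fnLE_iff, vectorFunctional_star_mul hS, vectorFunctional_star_mul hT,
    le_iff_forall_inner_apply_le]
  refine ⟨fun h x => ?_, fun h a => h _⟩
  exact hξ.induction_on (p := fun x => ⟪x, S x⟫_ℂ ≤ ⟪x, T x⟫_ℂ) x
    (isClosed_le (by fun_prop) (by fun_prop)) h

theorem exists_eq_vectorFunctional_of_fnLE (hξ : DenseRange fun a => π a ξ)
    (hR : R ∈ commutant π) (hp : IsRepresentable p) (hpR : FnLE p (vectorFunctional π ξ R)) :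
    ∃ T ∈ commutant π, 0 ≤ T ∧ T ≤ R ∧ p = vectorFunctional π ξ T := by
  obtain ⟨K, _, _, _, ρ, η, hη, rfl⟩ := hp.exists_eq_vectorFunctional
  have hC (a : A) : ‖ρ a η‖ ≤ √‖R‖ * ‖π a ξ‖ := by
    have hle := (Complex.le_def.1 (fnLE_iff.1 hpR a)).1
    rw [vectorFunctional_star_mul (one_mem _), vectorFunctional_star_mul hR] at hle
    refine le_of_sq_le_sq ?_ (by positivity)
    calc ‖ρ a η‖ ^ 2 = (⟪ρ a η, ρ a η⟫_ℂ).re := norm_sq_eq_re_inner (𝕜 := ℂ) _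
      _ ≤ (⟪π a ξ, R (π a ξ)⟫_ℂ).re := hle
      _ ≤ ‖π a ξ‖ * (‖R‖ * ‖π a ξ‖) := by
          grw [← R.le_opNorm]
          exact re_inner_le_norm (𝕜 := ℂ) _ _
      _ = (√‖R‖ * ‖π a ξ‖) ^ 2 := by rw [mul_pow, Real.sq_sqrt (norm_nonneg R)]; ring
  obtain ⟨V, rfl, hV⟩ := exists_intertwining_of_norm_le hξ hη hC
  have hcomm := adjoint_comp_self_mem_commutant hV
  have heq : vectorFunctional ρ (V ξ) 1 = vectorFunctional π ξ (V.adjoint ∘L V) := by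
    ext a
    calc ⟪V ξ, ρ a (V ξ)⟫_ℂ = ⟪V ξ, V (π a ξ)⟫_ℂ := by rw [hV]
      _ = ⟪ξ, V.adjoint (V (π a ξ))⟫_ℂ := (V.adjoint_inner_right _ _).symm
  refine ⟨V.adjoint ∘L V, hcomm, ?_, ?_, heq⟩
  · exact (ContinuousLinearMap.nonneg_iff_isPositive _).2 V.isPositive_adjoint_comp_self
  · rwa [heq, fnLE_vectorFunctional_iff hξ hcomm hR] at hpR

theorem IsRepresentable.sub (hf : IsRepresentable f) (hg : IsRepresentable g) (hgf : FnLE g f) :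
    IsRepresentable (f - g) := by
  obtain ⟨H, _, _, _, π, ξ, hξ, rfl⟩ := hf.exists_eq_vectorFunctional
  obtain ⟨T, hT, -, h1, rfl⟩ := exists_eq_vectorFunctional_of_fnLE hξ (one_mem _) hg hgf
  rw [← map_sub]
  exact isRepresentable_vectorFunctional (sub_mem (one_mem _) hT) (sub_nonneg.2 h1)

theorem exists_common_vectorFunctional (hf : IsRepresentable f) (hg : IsRepresentable g) :
    ∃ (H : Type) (_ : NormedAddCommGroup H) (_ : InnerProductSpace ℂ H) (_ : CompleteSpace H)
      (π : A →⋆ₙₐ[ℂ] (H →L[ℂ] H)) (ξ : H), (DenseRange fun a => π a ξ) ∧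
      ∃ T ∈ commutant π, 0 ≤ T ∧ T ≤ 1 ∧
        f = vectorFunctional π ξ T ∧ g = vectorFunctional π ξ (1 - T) := by
  obtain ⟨H, _, _, _, π, ξ, hξ, hfg⟩ := (hf.add hg).exists_eq_vectorFunctional
  obtain ⟨T, hT, h0, h1, rfl⟩ := exists_eq_vectorFunctional_of_fnLE hξ (one_mem _) hf
    (hfg ▸ fnLE_add_right hg.isPosFn)
  exact ⟨H, _, _, _, π, ξ, hξ, T, hT, h0, h1, rfl, by rw [map_sub, ← hfg, add_sub_cancel_left]⟩

end Representability

section LebesgueDecomposition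

open Filter

variable {A : Type} [NonUnitalRing A] [Module ℂ A] [StarRing A] {f g p : A →ₗ[ℂ] ℂ}
  {H : Type} [NormedAddCommGroup H] [InnerProductSpace ℂ H] [CompleteSpace H]
  {π : A →⋆ₙₐ[ℂ] (H →L[ℂ] H)} {ξ : H} {T R G P B : H →L[ℂ] H}

theorem SingularR.eq_zero_of_fnLE_real_smul (h : SingularR f g) (hp : IsRepresentable p)
    (hpf : FnLE p f) {c : ℝ} (hc : 0 < c) (hpg : FnLE p ((c : ℂ) • g)) : p = 0 := by
  have hpos : 0 < (1 + c)⁻¹ := by positivity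
  have hle_one : (1 + c)⁻¹ ≤ 1 := inv_le_one_of_one_le₀ (by linarith)
  have hle_inv : (1 + c)⁻¹ ≤ c⁻¹ := inv_anti₀ hc (by linarith)
  have hp_one := hp.isPosFn.real_smul_fnLE_real_smul hle_one
  have hpg_inv := hpg.real_smul (inv_nonneg.2 hc.le)
  rw [Complex.ofReal_one, one_smul] at hp_one
  rw [smul_smul, ← Complex.ofReal_mul, inv_mul_cancel₀ hc.ne', Complex.ofReal_one, one_smul]
    at hpg_inv
  have hq := hp.real_smul hpos.le
  have hq_zero := h _ hq hq.isPosFn (hp_one.trans hpf)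
    ((hp.isPosFn.real_smul_fnLE_real_smul hle_inv).trans hpg_inv)
  exact (smul_eq_zero.1 hq_zero).resolve_left (Complex.ofReal_ne_zero.2 hpos.ne')

theorem AbsContR.eq_zero_of_singularR (hac : AbsContR f g) (hs : SingularR f g) : f = 0 := by
  obtain ⟨fn, α, hfn, hα, hmono, hle, hlim⟩ := hac
  have hzero (n : ℕ) : fn n = 0 :=
    hs.eq_zero_of_fnLE_real_smul (hfn n).1 (fnLE_of_tendsto hmono hlim n) (hα n) (hle n)
  simp only [hzero] at hlim
  exact LinearMap.ext fun a => tendsto_nhds_unique (hlim a) tendsto_const_nhds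

theorem mul_eq_zero_of_absContR (hξ : DenseRange fun a => π a ξ) (hR : R ∈ commutant π)
    (hG : G ∈ commutant π) (hac : AbsContR (vectorFunctional π ξ R) (vectorFunctional π ξ G))
    (hGB : G * B = 0) : R * B = 0 := by
  obtain ⟨fn, α, hfn, -, hmono, hle, hlim⟩ := hac
  choose U hU hU0 hUR hfnU using fun n => exists_eq_vectorFunctional_of_fnLE hξ hR (hfn n).1
    (fnLE_of_tendsto hmono hlim n)
  obtain rfl : fn = fun n => vectorFunctional π ξ (U n) := funext hfnU
  have hUB (n : ℕ) : U n * B = 0 := by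
    have hUG : U n ≤ (α n : ℂ) • G := by
      rw [← fnLE_vectorFunctional_iff hξ (hU n) (Subalgebra.smul_mem _ hG _), map_smul]
      exact hle n
    exact mul_eq_zero_of_nonneg_of_le (hU0 n) hUG (by rw [smul_mul_assoc, hGB, smul_zero])
  have hdiff (a : A) : Tendsto (fun n => (R - U n) (π a ξ)) atTop (nhds 0) := by
    refine tendsto_apply_zero_of_tendsto_inner (R := R) (fun n => sub_nonneg.2 (hUR n))
      (fun n => sub_le_self _ (hU0 n)) ?_
    have h := (hlim (star a * a)).const_sub (vectorFunctional π ξ R (star a * a))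
    simpa only [vectorFunctional_star_mul hR, vectorFunctional_star_mul (hU _), sub_self,
      ← inner_sub_right, ← sub_apply] using h
  ext x
  refine hξ.eq_zero_of_inner_right ℂ fun a => ?_
  have hconst (n : ℕ) : ⟪(R - U n) (π a ξ), B x⟫_ℂ = ⟪π a ξ, (R * B) x⟫_ℂ := by
    have hpos := (R - U n).nonneg_iff_isPositive.1 (sub_nonneg.2 (hUR n))
    rw [hpos.inner_left_eq_inner_right, ← mul_apply_eq_comp, sub_mul, hUB, sub_zero]
  have hinner := (hdiff a).inner (𝕜 := ℂ) (tendsto_const_nhds (x := B x))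
  simp only [hconst, inner_zero_left] at hinner
  exact tendsto_nhds_unique tendsto_const_nhds hinner

theorem singularR_vectorFunctional_of_mul_eq_zero (hξ : DenseRange fun a => π a ξ)
    (hP : P ∈ commutant π) (hproj : IsStarProjection P) (hG : G ∈ commutant π) (hGP : G * P = 0) :
    SingularR (vectorFunctional π ξ P) (vectorFunctional π ξ G) := by
  intro p hp _ hpP hpG
  obtain ⟨S, hS, hS0, hSP, rfl⟩ := exists_eq_vectorFunctional_of_fnLE hξ hP hp hpP
  have hSG : S ≤ G := (fnLE_vectorFunctional_iff hξ hS hG).1 hpG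
  have hSmul : S * P = S := (hproj.mul_right_and_mul_left_of_nonneg_of_le hS0 hSP).1
  rw [← hSmul, mul_eq_zero_of_nonneg_of_le hS0 hSG hGP, map_zero]

theorem absContR_vectorFunctional_sub_fixedProjection (hξ : DenseRange fun a => π a ξ)
    (hT : T ∈ commutant π) (h0 : 0 ≤ T) (h1 : T ≤ 1) :
    AbsContR (vectorFunctional π ξ (T - fixedProjection T)) (vectorFunctional π ξ (1 - T)) := by
  have hmem (n : ℕ) : T - T ^ (n + 1) ∈ commutant π := sub_mem hT (pow_mem hT _)
  have hpow : Antitone (T ^ · : ℕ → H →L[ℂ] H) := CStarAlgebra.pow_antitone h0 h1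
  have hnonneg (n : ℕ) : 0 ≤ T - T ^ (n + 1) :=
    sub_nonneg.2 (by simpa using hpow (Nat.le_add_left 1 n))
  have hrep (n : ℕ) : IsRepresentable (vectorFunctional π ξ (T - T ^ (n + 1))) :=
    isRepresentable_vectorFunctional (hmem n) (hnonneg n)
  refine ⟨fun n => vectorFunctional π ξ (T - T ^ (n + 1)), fun n => n + 1,
    fun n => ⟨hrep n, (hrep n).isPosFn⟩, fun n => by positivity, fun n => ?_, fun n => ?_,
    fun a => ?_⟩
  · rw [fnLE_vectorFunctional_iff hξ (hmem n) (hmem (n + 1))]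
    exact sub_le_sub_left (hpow (n + 1).le_succ) T
  · rw [← map_smul, fnLE_vectorFunctional_iff hξ (hmem n)
      (Subalgebra.smul_mem _ (sub_mem (one_mem _) hT) _)]
    calc T - T ^ (n + 1) ≤ 1 - T ^ (n + 1) := sub_le_sub_right h1 _
      _ ≤ (n + 1) • (1 - T) := one_sub_pow_le_nsmul_one_sub h0 h1 (n + 1)
      _ = (((n + 1 : ℝ) : ℂ)) • (1 - T) := by rw [← Nat.cast_smul_eq_nsmul ℂ]; norm_cast
  · have hlim := (tendsto_pow_apply_fixedProjection h0 h1 (π a ξ)).comp (tendsto_add_atTop_nat 1)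
    exact tendsto_const_nhds.inner (hlim.const_sub (T (π a ξ)))

theorem exists_maximal_isLebDecompR (hf : IsRepresentable f) (hg : IsRepresentable g) :
    ∃ r s, IsLebDecompR f g r s ∧ SingularR s r ∧
      ∀ u, IsRepresentable u → FnLE u f → AbsContR u g → FnLE u r := by
  obtain ⟨H, _, _, _, π, ξ, hξ, T, hT, h0, h1, rfl, rfl⟩ := exists_common_vectorFunctional hf hg
  set P := fixedProjection T
  have hproj : IsStarProjection P := isStarProjection_fixedProjection T
  have hP : P ∈ commutant π := fixedProjection_mem_commutant hT
  have hTP : T * P = P := mul_fixedProjection T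
  have hG : 1 - T ∈ commutant π := sub_mem (one_mem _) hT
  have hGP : (1 - T) * P = 0 := by rw [sub_mul, one_mul, hTP, sub_self]
  have hr0 : 0 ≤ T - P :=
    le_sub_of_isStarProjection hproj h0.isSelfAdjoint (.zero _) h0 hTP (zero_mul P)
  have hr := isRepresentable_vectorFunctional (ξ := ξ) (sub_mem hT hP) hr0
  have hs := isRepresentable_vectorFunctional (ξ := ξ) hP hproj.nonneg
  refine ⟨vectorFunctional π ξ (T - P), vectorFunctional π ξ P,
    ⟨hr, hr.isPosFn, hs, hs.isPosFn, by rw [← map_add, sub_add_cancel],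
      absContR_vectorFunctional_sub_fixedProjection hξ hT h0 h1,
      singularR_vectorFunctional_of_mul_eq_zero hξ hP hproj hG hGP⟩,
    singularR_vectorFunctional_of_mul_eq_zero hξ hP hproj (sub_mem hT hP)
      (by rw [sub_mul, hTP, hproj.isIdempotentElem.eq, sub_self]), fun u hu huf hug => ?_⟩
  obtain ⟨U, hU, hU0, hUT, rfl⟩ := exists_eq_vectorFunctional_of_fnLE hξ hT hu huf
  rw [fnLE_vectorFunctional_iff hξ hU (sub_mem hT hP)]
  exact le_sub_of_isStarProjection hproj h0.isSelfAdjoint hU0.isSelfAdjoint hUT hTP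
    (mul_eq_zero_of_absContR hξ hU hG hug hGP)

theorem IsLebDecompR.eq_of_fnLE {r s r' s' : A →ₗ[ℂ] ℂ} (h : IsLebDecompR f g r s)
    (h' : IsLebDecompR f g r' s') (hle : FnLE r' r)
    (hzero : ∀ p, IsRepresentable p → FnLE p r → SingularR p g → p = 0) : r' = r ∧ s' = s := by
  obtain ⟨hr, -, -, hs0, hf, -, -⟩ := h
  obtain ⟨hr', hr'0, -, -, hf', -, hs'⟩ := h'
  have hdiff : r - r' = s' - s := by rw [sub_eq_sub_iff_add_eq_add, ← hf, hf', add_comm]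
  have hpr : FnLE (r - r') r := by rwa [FnLE, sub_sub_cancel]
  have hps' : FnLE (r - r') s' := by rwa [hdiff, FnLE, sub_sub_cancel]
  have hp : r - r' = 0 := hzero _ (hr.sub hr' hle) hpr (hs'.mono_left hps')
  exact ⟨(sub_eq_zero.1 hp).symm, sub_eq_zero.1 (hdiff.symm.trans hp)⟩

theorem lebDecompUniqueForR_of_forall_eq_zero (hf : IsRepresentable f) (hg : IsRepresentable g)
    (hzero : ∀ r p, IsRepresentable r → IsRepresentable p → FnLE p r → AbsContR r g →
      SingularR p g → p = 0) : LebDecompUniqueForR f g := by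
  obtain ⟨r, s, hrs, -, hmax⟩ := exists_maximal_isLebDecompR hf hg
  have ⟨hr, _, _, _, _, hrg, _⟩ := hrs
  have heq {r' s'} (h : IsLebDecompR f g r' s') : r' = r ∧ s' = s := by
    have ⟨hr', _, _, hs'0, hf', hr'g, _⟩ := h
    exact hrs.eq_of_fnLE h (hmax r' hr' (hf' ▸ fnLE_add_right hs'0) hr'g)
      fun p hp hpr => hzero r p hr hp hpr hrg
  intro r₁ s₁ r₂ s₂ h₁ h₂
  obtain ⟨rfl, rfl⟩ := heq h₁
  exact ⟨(heq h₂).1.symm, (heq h₂).2.symm⟩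

end LebesgueDecomposition

/-- **Lemma 2.2**: characterizations of the uniqueness of the Lebesgue decomposition of
representable positive functionals over a `⋆`-algebra `A`. -/
theorem lebesgue_unique_tfae
    (A : Type) [NonUnitalRing A] [Module ℂ A] [SMulCommClass ℂ A A]
    [IsScalarTower ℂ A A] [StarRing A] [StarModule ℂ A] :
    List.TFAE
      [ LebDecompUniqueR A,
        ∀ t f g : A →ₗ[ℂ] ℂ,
          IsRepresentable t → IsPosFn t → IsRepresentable f → IsPosFn f →
          IsRepresentable g → IsPosFn g →
          FnLE t f → AbsContR f g → AbsContR t g,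
        ∀ f g p : A →ₗ[ℂ] ℂ,
          IsRepresentable f → IsPosFn f → IsRepresentable g → IsPosFn g →
          IsRepresentable p → IsPosFn p →
          FnLE p f → AbsContR f g → SingularR p g → p = 0 ] := by
  tfae_have 1 → 3 := by
    intro huniq f g p hf hf0 hg hg0 hp hp0 hpf hac hsing
    have hfp := hf.add hp
    obtain ⟨r, s, hrs, hsr, -⟩ := exists_maximal_isLebDecompR hfp hg
    obtain ⟨rfl, rfl⟩ := huniq (f + p) g hfp hfp.isPosFn hg hg0 r s f p hrs
      ⟨hf, hf0, hp, hp0, rfl, hac, hsing⟩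
    exact hsr _ hp hp0 (.refl _) hpf
  tfae_have 3 → 1 := fun hzero f g hf _ hg hg0 =>
    lebDecompUniqueForR_of_forall_eq_zero hf hg fun r p hr hp =>
      hzero r g p hr hr.isPosFn hg hg0 hp hp.isPosFn
  tfae_have 2 → 3 := fun hmono f g p hf hf0 hg hg0 hp hp0 hpf hac hsing =>
    (hmono p f g hp hp0 hf hf0 hg hg0 hpf hac).eq_zero_of_singularR hsing
  tfae_have 3 → 2 := by
    intro hzero t f g ht _ hf hf0 hg hg0 htf hac
    obtain ⟨r, s, ⟨-, hr0, hs, hs0, rfl, hrg, hsg⟩, -⟩ := exists_maximal_isLebDecompR ht hg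
    have hsf : FnLE s f := (fnLE_add_left hr0).trans htf
    rwa [hzero f g s hf hf0 hg hg0 hs hs0 hsf hac hsg, add_zero]
  tfae_finish
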